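/- Let W be a full binary forest and consider the pruning procedure on W. Then for every i ≥ 1, the set of only-child-paths of W_(i−1) is a set of ascending paths of the original forest W whose endpoints are pairwise distinct and form an independent set of nodes of W; moreover, the nodes deleted in the i-th iteration are exactly the nodes lying on these paths. -/

import Mathlib

noncomputable section
open scoped Classical

/-- A finite full binary forest.  Nodes are natural numbers, every node's parent has a
strictly larger index, and every node has exactly `0` or `2` children. -/
structure PForest where
  nodes : Finset ℕ
  parent : ℕ → Option ℕ
  parent_lt : ∀ x y, parent x = some y → x < y
  parent_mem : ∀ x ∈ nodes, ∀ y, parent x = some y → y ∈ nodes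
  parent_none_of_not_mem : ∀ x, x ∉ nodes → parent x = none
  full : ∀ x ∈ nodes, (nodes.filter (fun y => parent y = some x)).card = 0 ∨
    (nodes.filter (fun y => parent y = some x)).card = 2

/-- The children of a node. -/
def PForest.children (F : PForest) (x : ℕ) : Finset ℕ :=
  F.nodes.filter (fun y => F.parent y = some x)

theorem PForest.child_lt (F : PForest) {y x : ℕ} (h : y ∈ F.children x) : y < x :=
  F.parent_lt _ _ (Finset.mem_filter.mp h).2

/-- The function `r`: `r(x) = 1` for leaves; for an internal node with children
`y₁, y₂`, `r(x) = r(y₁) + 1` if `r(y₁) = r(y₂)` and `r(x) = max (r(y₁)) (r(y₂))`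
otherwise. -/
def PForest.rank (F : PForest) (x : ℕ) : ℕ :=
  if h : (F.children x).Nonempty then
    if F.rank ((F.children x).min' h) = F.rank ((F.children x).max' h)
    then F.rank ((F.children x).min' h) + 1
    else max (F.rank ((F.children x).min' h)) (F.rank ((F.children x).max' h))
  else 1
termination_by x
decreasing_by
  all_goals first
    | exact F.child_lt (Finset.min'_mem _ h)
    | exact F.child_lt (Finset.max'_mem _ h)

/-- `x` is a leaf of the induced forest on the node set `S`. -/
def PForest.leafIn (F : PForest) (S : Finset ℕ) (x : ℕ) : Prop :=
  x ∈ S ∧ ∀ y ∈ S, F.parent y ≠ some x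

/-- `x` has a sibling in the induced forest on the node set `S`. -/
def PForest.hasSiblingIn (F : PForest) (S : Finset ℕ) (x : ℕ) : Prop :=
  ∃ y ∈ S, y ≠ x ∧ F.parent y = F.parent x ∧ F.parent x ≠ none

/-- An ascending path of the forest: a nonempty list of nodes in which each entry is
followed by its parent. -/
def PForest.IsAscPath (F : PForest) (l : List ℕ) : Prop :=
  l ≠ [] ∧ (∀ x ∈ l, x ∈ F.nodes) ∧ l.Chain' (fun a b => F.parent a = some b)

/-- An only-child-path of the induced forest on the node set `S`: an ascending path
starting at a leaf of `S`, all of whose nodes except the last have no sibling in `S`,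
and ending at the first node that has a sibling in `S`, or at a root. -/
def PForest.OnlyChildPath (F : PForest) (S : Finset ℕ) (l : List ℕ) : Prop :=
  l ≠ [] ∧ (∀ x ∈ l, x ∈ S) ∧ l.Chain' (fun a b => F.parent a = some b) ∧
  (∀ x, l.head? = some x → F.leafIn S x) ∧
  (∀ x ∈ l.dropLast, ¬ F.hasSiblingIn S x) ∧
  (∀ x, l.getLast? = some x → (F.hasSiblingIn S x ∨ F.parent x = none))

/-- One iteration of the pruning procedure: delete all nodes lying on some
only-child-path of `S`. -/
def PForest.prune (F : PForest) (S : Finset ℕ) : Finset ℕ :=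
  S.filter (fun x => ¬ ∃ l, F.OnlyChildPath S l ∧ x ∈ l)

/-- `W_(i)`: the forest left after `i` iterations of the pruning procedure. -/
def PForest.Wset (F : PForest) (i : ℕ) : Finset ℕ :=
  (F.prune)^[i] F.nodes

/-- `x` is a (weak) ancestor of `y`: `x` is reachable from `y` by iterating `parent`. -/
def PForest.Ancestor (F : PForest) (x y : ℕ) : Prop :=
  Relation.ReflTransGen (fun a b => F.parent a = some b) y x

/-- `s(x)`: the number of nodes in the subtree rooted at `x`. -/
def PForest.subtreeSize (F : PForest) (x : ℕ) : ℕ :=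
  (F.nodes.filter (fun y => F.Ancestor x y)).card

/-- The leaves of the forest. -/
def PForest.leaves (F : PForest) : Finset ℕ :=
  F.nodes.filter (fun x => F.children x = ∅)

/-!
Over a node set `S` closed under taking parents, the only-child-path ending at `x` consists of
exactly those nodes of `S` that are weak descendants of `x`: a node of the path other than the first
has a predecessor on the path without siblings, so that this predecessor is its only child in `S`.
Hence a path is determined by its endpoint. If one endpoint were a proper ancestor of another, the
latter would be a node of the former's path other than its last, hence neither a root nor a node
with a sibling, which no endpoint is. Pruning removes the descendants of every node it removes, so
every `W_(i)` is closed under taking parents.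
-/

namespace PForest

variable {F : PForest} {S : Finset ℕ}

/-- A node set closed under taking parents, i.e. an upper set for the ancestor order. For such `S`
the restriction of `F.parent` makes `S` a forest by itself, as each `W_(i)` is. -/
def IsParentClosed (F : PForest) (S : Finset ℕ) : Prop :=
  ∀ x ∈ S, ∀ y, F.parent x = some y → y ∈ S

theorem eq_of_parent_eq_of_not_hasSiblingIn {x y z : ℕ} (hy : ¬ F.hasSiblingIn S y) (hz : z ∈ S)
    (hyx : F.parent y = some x) (hzx : F.parent z = some x) : z = y := by
  by_contra hne
  exact hy ⟨z, hz, hne, hzx.trans hyx.symm, by simp [hyx]⟩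

namespace OnlyChildPath

variable {l l₁ l₂ : List ℕ} {x x₁ x₂ : ℕ}

theorem isAscPath (h : F.OnlyChildPath S l) (hS : S ⊆ F.nodes) : F.IsAscPath l :=
  ⟨h.1, fun x hx => hS (h.2.1 x hx), h.2.2.1⟩

theorem sortedLT (h : F.OnlyChildPath S l) : l.SortedLT :=
  (h.2.2.1.imp F.parent_lt).sortedLT

theorem ancestor_of_mem (h : F.OnlyChildPath S l) (hx : l.getLast? = some x) {z : ℕ}
    (hz : z ∈ l) : F.Ancestor x z := by
  refine h.2.2.1.backwards_induction (F.Ancestor x) l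
    (fun _ _ hab hb => Relation.ReflTransGen.head hab hb) (fun hne => ?_) z hz
  rw [Option.some.inj ((List.getLast?_eq_some_getLast hne).symm.trans hx)]
  exact Relation.ReflTransGen.refl

theorem mem_of_parent_mem (h : F.OnlyChildPath S l) {w z : ℕ} (hw : w ∈ l) (hz : z ∈ S)
    (hzw : F.parent z = some w) : z ∈ l := by
  obtain ⟨-, -, hchain, hhead, hsib, -⟩ := h
  obtain ⟨p, q, rfl⟩ := List.append_of_mem hw
  rcases List.eq_nil_or_concat' p with rfl | ⟨p, v, rfl⟩
  · exact absurd hzw ((hhead w rfl).2 z hz)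
  · have hvw : F.parent v = some w := (List.isChain_append.mp hchain).2.2 v (by simp) w rfl
    have hv : ¬ F.hasSiblingIn S v := hsib v (by simp)
    simp [eq_of_parent_eq_of_not_hasSiblingIn hv hz hvw hzw]

theorem mem_iff_mem_and_ancestor (h : F.OnlyChildPath S l) (hS : F.IsParentClosed S)
    (hx : l.getLast? = some x) {z : ℕ} : z ∈ l ↔ z ∈ S ∧ F.Ancestor x z := by
  refine ⟨fun hz => ⟨h.2.1 z hz, h.ancestor_of_mem hx hz⟩, ?_⟩
  rintro ⟨hz, hxz⟩
  induction hxz using Relation.ReflTransGen.head_induction_on with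
  | refl => exact List.mem_of_getLast? hx
  | head hparent _ ih => exact h.mem_of_parent_mem (ih (hS _ hz _ hparent)) hz hparent

theorem eq_of_getLast?_eq (h₁ : F.OnlyChildPath S l₁) (h₂ : F.OnlyChildPath S l₂)
    (hS : F.IsParentClosed S) (hx₁ : l₁.getLast? = some x) (hx₂ : l₂.getLast? = some x) :
    l₁ = l₂ :=
  h₁.sortedLT.eq_of_mem_iff h₂.sortedLT fun _ =>
    (h₁.mem_iff_mem_and_ancestor hS hx₁).trans (h₂.mem_iff_mem_and_ancestor hS hx₂).symm

theorem eq_of_ancestor_getLast? (h₁ : F.OnlyChildPath S l₁) (h₂ : F.OnlyChildPath S l₂)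
    (hS : F.IsParentClosed S) (hx₁ : l₁.getLast? = some x₁) (hx₂ : l₂.getLast? = some x₂)
    (hanc : F.Ancestor x₁ x₂) : x₁ = x₂ := by
  by_contra hne
  have hmem : x₂ ∈ l₁ :=
    (h₁.mem_iff_mem_and_ancestor hS hx₁).mpr ⟨h₂.2.1 x₂ (List.mem_of_getLast? hx₂), hanc⟩
  have hnotLast : some x₂ ≠ l₁.getLast? := fun h => hne (Option.some.inj (h.trans hx₁)).symm
  obtain ⟨-, -, -, -, hnoSibling, -⟩ := h₁
  obtain ⟨-, -, -, -, -, hend⟩ := h₂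
  rcases hend x₂ hx₂ with hsib | hroot
  · exact hnoSibling x₂ (List.mem_dropLast_of_mem_of_ne_getLast? hmem hnotLast) hsib
  · obtain heq | ⟨y, hy, -⟩ := Relation.ReflTransGen.cases_head hanc
    · exact hne heq.symm
    · exact Option.some_ne_none y (hy.symm.trans hroot)

end OnlyChildPath

theorem mem_and_notMem_prune_iff {x : ℕ} :
    x ∈ S ∧ x ∉ F.prune S ↔ ∃ l, F.OnlyChildPath S l ∧ x ∈ l := by
  rw [prune, Finset.mem_filter, not_and_not_right]
  constructor
  · exact fun ⟨hx, hpath⟩ => hpath hx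
  · rintro ⟨l, hl, hx⟩
    exact ⟨hl.2.1 x hx, fun _ => ⟨l, hl, hx⟩⟩

theorem IsParentClosed.prune (hS : F.IsParentClosed S) : F.IsParentClosed (F.prune S) := by
  intro x hx y hxy
  obtain ⟨hxS, hx⟩ := Finset.mem_filter.mp hx
  refine Finset.mem_filter.mpr ⟨hS x hxS y hxy, ?_⟩
  rintro ⟨l, hl, hy⟩
  exact hx ⟨l, hl, hl.mem_of_parent_mem hy hxS hxy⟩

theorem Wset_succ (F : PForest) (i : ℕ) : F.Wset (i + 1) = F.prune (F.Wset i) :=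
  Function.iterate_succ_apply' _ _ _

theorem Wset_subset_nodes (F : PForest) (i : ℕ) : F.Wset i ⊆ F.nodes := by
  induction i with
  | zero => exact Finset.Subset.refl _
  | succ i ih => exact F.Wset_succ i ▸ (Finset.filter_subset _ _).trans ih

theorem isParentClosed_Wset (F : PForest) (i : ℕ) : F.IsParentClosed (F.Wset i) := by
  induction i with
  | zero => exact F.parent_mem
  | succ i ih => exact F.Wset_succ i ▸ ih.prune

end PForest

theorem pruning_paths_independent_general (F : PForest) {S : Finset ℕ} (hnodes : S ⊆ F.nodes)
    (hS : F.IsParentClosed S) :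
    (∀ l, F.OnlyChildPath S l → F.IsAscPath l) ∧
    (∀ l₁ l₂ x₁ x₂, F.OnlyChildPath S l₁ → F.OnlyChildPath S l₂ →
      l₁.getLast? = some x₁ → l₂.getLast? = some x₂ →
      (l₁ ≠ l₂ → x₁ ≠ x₂) ∧ (x₁ ≠ x₂ → ¬ F.Ancestor x₁ x₂)) ∧
    (∀ x, (x ∈ S ∧ x ∉ F.prune S) ↔ ∃ l, F.OnlyChildPath S l ∧ x ∈ l) := by
  refine ⟨fun l hl => hl.isAscPath hnodes, fun l₁ l₂ x₁ x₂ h₁ h₂ hx₁ hx₂ => ⟨?_, ?_⟩,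
    fun x => PForest.mem_and_notMem_prune_iff⟩
  · rintro hne rfl
    exact hne (h₁.eq_of_getLast?_eq h₂ hS hx₁ hx₂)
  · exact fun hne hanc => hne (h₁.eq_of_ancestor_getLast? h₂ hS hx₁ hx₂ hanc)

/-- For every `i ≥ 1`, the only-child-paths of `W_(i−1)` are
ascending paths of the original forest `W`, their endpoints are pairwise distinct and
form an independent set of nodes of `W` (none is a proper ancestor of another), and
the nodes deleted in the `i`-th iteration are exactly the nodes lying on these
paths. -/
theorem pruning_paths_independent (F : PForest) (i : ℕ) (hi : 1 ≤ i) :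
    (∀ l, F.OnlyChildPath (F.Wset (i-1)) l → F.IsAscPath l) ∧
    (∀ l₁ l₂ x₁ x₂, F.OnlyChildPath (F.Wset (i-1)) l₁ →
      F.OnlyChildPath (F.Wset (i-1)) l₂ →
      l₁.getLast? = some x₁ → l₂.getLast? = some x₂ →
      (l₁ ≠ l₂ → x₁ ≠ x₂) ∧ (x₁ ≠ x₂ → ¬ F.Ancestor x₁ x₂)) ∧
    (∀ x, (x ∈ F.Wset (i-1) ∧ x ∉ F.Wset i) ↔
      ∃ l, F.OnlyChildPath (F.Wset (i-1)) l ∧ x ∈ l) := by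
  obtain ⟨i, rfl⟩ := Nat.exists_eq_add_of_le' hi
  rw [Nat.add_sub_cancel, F.Wset_succ]
  exact pruning_paths_independent_general F (F.Wset_subset_nodes i) (F.isParentClosed_Wset i)
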